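/- Let G be a connected simple graph with n > 3 vertices and m edges. If the complement of G is 4-connected, then mc(G) = m − n + 2. -/

import Mathlib

open SimpleGraph Filter Real

/-- An edge-coloring `c` (colors on vertex pairs, only the values on edges matter)
of `G` is a monochromatic connection coloring (MC-coloring) if every two vertices
are joined by a path all of whose edges receive the same color. -/
def IsMCColoring {V : Type*} (G : SimpleGraph V) (c : Sym2 V → ℕ) : Prop :=
  ∀ u v : V, ∃ p : G.Walk u v, p.IsPath ∧ ∃ k : ℕ, ∀ e ∈ p.edges, c e = k

/-- `mcNum G` is the maximum number of colors (counted on the edges of `G`)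
used in an MC-coloring of `G`; it is `0` if `G` admits no MC-coloring
(in particular if `G` is disconnected). -/
noncomputable def mcNum {V : Type*} (G : SimpleGraph V) : ℕ :=
  sSup {k | ∃ c : Sym2 V → ℕ, IsMCColoring G c ∧ (Set.image c G.edgeSet).ncard = k}

/-- A graph is `k`-connected if it has more than `k` vertices and deleting any
set of fewer than `k` vertices leaves it connected. -/
def IsKConnected {V : Type*} [Fintype V] (G : SimpleGraph V) (k : ℕ) : Prop :=
  k < Fintype.card V ∧
    ∀ S : Finset V, S.card < k → (G.induce ((S : Set V)ᶜ)).Connected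

/-!
Giving one color to a spanning tree and distinct fresh colors to all other edges is an MC-coloring
with `m - n + 2` colors.

Conversely, call the vertex set of a component of a color class a *block*. Comparing a color class
with a spanning forest of it, its number of edges is at least one plus the sum of `|B| - 2` over its
blocks `B` (single vertices contribute `0`, by truncated subtraction); hence an MC-coloring has at
most `m - ∑ (|B| - 2)` colors. Every edge of the complement `H` has its ends in a common block, so
it is enough to show `∑ (|B| - 2) ≥ n - 2` for every family of blocks, connected in the complement
of `H`, that covers the edges of the 4-connected graph `H`. This is clear if some block is
everything. Otherwise count for every vertex `v` one unit for each block containing `v` and an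
`H`-neighbor of `v`, and one further unit for each block containing `v` and all its `H`-neighbors.
Every vertex is counted at least twice, and 4-connectivity implies that a block `B` is counted at
most `2 (|B| - 2)` times.
-/

section Graphs

variable {V : Type*}

theorem exists_isUniversal_of_card_le_three [Finite V] {G : SimpleGraph V} (hG : G.Connected)
    (hV : Nat.card V ≤ 3) : ∃ v, G.IsUniversal v := by
  obtain ⟨v⟩ := hG.nonempty
  by_cases hv : G.IsUniversal v
  · exact ⟨v, hv⟩
  obtain ⟨u, hvu, hnvu⟩ : ∃ u, v ≠ u ∧ ¬ G.Adj v u := by simpa [IsUniversal] using hv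
  have : Nontrivial V := ⟨v, u, hvu⟩
  obtain ⟨w, hvw⟩ := hG.preconnected.exists_adj_of_nontrivial v
  obtain ⟨x, hux⟩ := hG.preconnected.exists_adj_of_nontrivial u
  have u_ne_w : u ≠ w := by rintro rfl; exact hnvu hvw
  have eq_or_eq_or_eq (y : V) : y = v ∨ y = u ∨ y = w := by
    by_contra! hy
    have := Fintype.ofFinite V
    have four_le : 4 ≤ Fintype.card V := by
      classical
      have hcard : ({v, u, w, y} : Finset V).card = 4 := by grind [Adj.ne]
      exact hcard ▸ Finset.card_le_univ _
    rw [Nat.card_eq_fintype_card] at hV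
    omega
  have adj_uw : G.Adj u w := by
    obtain rfl | rfl | rfl := eq_or_eq_or_eq x
    · exact absurd hux.symm hnvu
    · exact absurd rfl hux.ne
    · exact hux
  refine ⟨w, fun y hwy ↦ ?_⟩
  obtain rfl | rfl | rfl := eq_or_eq_or_eq y
  · exact hvw.symm
  · exact adj_uw.symm
  · exact absurd rfl hwy

theorem sum_ncard_supp_sub_one_le [Finite V] (A : SimpleGraph V) [Fintype A.ConnectedComponent] :
    ∑ C : A.ConnectedComponent, (C.supp.ncard - 1) ≤ A.edgeSet.ncard := by
  let toEdge (e : Σ C : A.ConnectedComponent, C.toSimpleGraph.edgeSet) : A.edgeSet :=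
    e.1.toSimpleGraph_hom.mapEdgeSet e.2
  have toEdge_injective : Function.Injective toEdge := by
    rintro ⟨C, e, he⟩ ⟨C', e', he'⟩ heq
    have hmap : e.map Subtype.val = e'.map Subtype.val := congrArg Subtype.val heq
    obtain rfl : C = C' := by
      induction e with | _ a b
      have ha : a.1 ∈ e'.map Subtype.val := hmap ▸ Sym2.mem_mk_left a.1 b.1
      obtain ⟨a', -, ha'⟩ := Sym2.mem_map.1 ha
      exact a.2.symm.trans (ha' ▸ a'.2)
    obtain rfl := Sym2.map.injective Subtype.val_injective hmap
    rfl
  calc ∑ C : A.ConnectedComponent, (C.supp.ncard - 1)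
      ≤ ∑ C : A.ConnectedComponent, Nat.card C.toSimpleGraph.edgeSet :=
        Finset.sum_le_sum fun C _ ↦
          Nat.sub_le_of_le_add C.connected_toSimpleGraph.card_vert_le_card_edgeSet_add_one
    _ = Nat.card (Σ C : A.ConnectedComponent, C.toSimpleGraph.edgeSet) := Nat.card_sigma.symm
    _ ≤ A.edgeSet.ncard := Nat.card_le_card_of_injective toEdge toEdge_injective

theorem sum_ncard_supp_sub_two_lt [Finite V] {A : SimpleGraph V} [Fintype A.ConnectedComponent]
    (hA : A ≠ ⊥) : ∑ C : A.ConnectedComponent, (C.supp.ncard - 2) < A.edgeSet.ncard := by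
  obtain ⟨u, v, huv⟩ := ne_bot_iff_exists_adj.1 hA
  refine (Finset.sum_lt_sum (fun C _ ↦ by omega)
    ⟨A.connectedComponentMk u, Finset.mem_univ _, ?_⟩).trans_le (sum_ncard_supp_sub_one_le A)
  have one_lt : 1 < (A.connectedComponentMk u).supp.ncard :=
    (Set.one_lt_ncard (Set.toFinite _)).2
      ⟨u, rfl, v, ConnectedComponent.sound huv.symm.reachable, huv.ne⟩
  omega

end Graphs

namespace IsKConnected

variable {V : Type*} [Fintype V] {H : SimpleGraph V} {k : ℕ}

theorem connected (hH : IsKConnected H k) (hk : 0 < k) : H.Connected := by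
  have h := hH.2 ∅ hk
  rw [Finset.coe_empty, Set.compl_empty] at h
  exact (induceUnivIso H).connected_iff.1 h

theorem exists_adj (hH : IsKConnected H k) (hk : 0 < k) (v : V) : ∃ u, H.Adj v u := by
  have : Nontrivial V := Fintype.one_lt_card_iff_nontrivial.1 (by have := hH.1; omega)
  exact (hH.connected hk).preconnected.exists_adj_of_nontrivial v

theorem le_card_of_separates (hH : IsKConnected H k) {S I : Finset V} {x y : V}
    (hxS : x ∉ S) (hyS : y ∉ S) (hxI : x ∈ I) (hyI : y ∉ I)
    (hadj : ∀ a ∈ I, ∀ b ∉ S, H.Adj a b → b ∈ I) : k ≤ S.card := by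
  by_contra! hS
  obtain ⟨p⟩ := (hH.2 S hS).preconnected ⟨x, by simpa using hxS⟩ ⟨y, by simpa using hyS⟩
  obtain ⟨d, -, hfst, hsnd⟩ := p.exists_boundary_dart {a | a.1 ∈ I} hxI hyI
  exact hsnd (hadj _ hfst _ d.snd.2 d.adj)

end IsKConnected

section Blocks

open scoped Finset

variable {V : Type*} {H : SimpleGraph V} [DecidableRel H.Adj] {B : Finset V}

variable (H B) in
/-- The vertices of the block `B` that are not isolated in the subgraph of `H` induced on `B`. -/
def blockSupport : Finset V := {v ∈ B | ∃ u ∈ B, H.Adj v u}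

theorem blockSupport_subset : blockSupport H B ⊆ B := Finset.filter_subset _ _

theorem card_blockSupport_le (hB : (Hᶜ.induce (B : Set V)).Connected) :
    #(blockSupport H B) ≤ 2 * (#B - 2) := by
  obtain hsupp | ⟨v, hv⟩ := (blockSupport H B).eq_empty_or_nonempty
  · simp [hsupp]
  have hle : #(blockSupport H B) ≤ #B := Finset.card_le_card blockSupport_subset
  obtain hB4 | hB3 := le_or_gt 4 #B
  · omega
  obtain ⟨⟨x, hxB⟩, hx⟩ :=
    exists_isUniversal_of_card_le_three hB (by simpa using Nat.le_of_lt_succ hB3)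
  have not_adj (u : V) (hu : u ∈ B) : ¬ H.Adj x u := by
    by_cases hxu : x = u
    · exact hxu ▸ H.loopless.irrefl x
    · exact (@hx ⟨u, hu⟩ (by simpa using hxu)).2
  obtain ⟨hvB, u, huB, hvu⟩ := Finset.mem_filter.1 hv
  have three_le : 3 ≤ #B := Finset.two_lt_card.2
    ⟨v, hvB, u, huB, x, hxB, hvu.ne, by grind [H.adj_comm], by grind [H.adj_comm]⟩
  have x_notMem : x ∉ blockSupport H B := by
    simp only [blockSupport, Finset.mem_filter, not_and, not_exists]
    exact fun _ ↦ not_adj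
  have hlt : #(blockSupport H B) < #B :=
    Finset.card_lt_card (Finset.ssubset_iff_of_subset blockSupport_subset |>.2 ⟨x, hxB, x_notMem⟩)
  omega

variable [Fintype V] [DecidableEq V]

variable (H B) in
/-- The vertices of the block `B` all of whose `H`-neighbors lie in `B`. -/
def blockInterior : Finset V := {v ∈ B | ∀ u, H.Adj v u → u ∈ B}

theorem blockInterior_subset_blockSupport (hH : ∀ v, ∃ u, H.Adj v u) :
    blockInterior H B ⊆ blockSupport H B := by
  intro v hv
  obtain ⟨hvB, hnbr⟩ := Finset.mem_filter.1 hv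
  obtain ⟨u, hvu⟩ := hH v
  exact Finset.mem_filter.2 ⟨hvB, u, hnbr u hvu, hvu⟩

/-- The support vertices that are not interior separate the interior from the complement of `B`. -/
theorem four_le_card_blockSupport_sdiff_blockInterior (hH : IsKConnected H 4)
    (hI : (blockInterior H B).Nonempty) (hB : B ≠ Finset.univ) :
    4 ≤ #(blockSupport H B \ blockInterior H B) := by
  obtain ⟨x, hx⟩ := hI
  obtain ⟨y, hy⟩ : ∃ y, y ∉ B := by simpa [Finset.eq_univ_iff_forall] using hB
  refine hH.le_card_of_separates (x := x) (y := y) (I := blockInterior H B)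
    (fun h ↦ (Finset.mem_sdiff.1 h).2 hx)
    (fun h ↦ hy (blockSupport_subset (Finset.mem_sdiff.1 h).1))
    hx (fun h ↦ hy (Finset.mem_filter.1 h).1) fun a ha b hb hab ↦ ?_
  obtain ⟨haB, hnbr⟩ := Finset.mem_filter.1 ha
  have hbsupp : b ∈ blockSupport H B := Finset.mem_filter.2 ⟨hnbr b hab, a, haB, hab.symm⟩
  simpa [hbsupp] using hb

theorem card_blockSupport_add_card_blockInterior_le (hH : IsKConnected H 4)
    (hconn : (Hᶜ.induce (B : Set V)).Connected) (hB : B ≠ Finset.univ) :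
    #(blockSupport H B) + #(blockInterior H B) ≤ 2 * (#B - 2) := by
  obtain hI | hI := (blockInterior H B).eq_empty_or_nonempty
  · simpa [hI] using card_blockSupport_le hconn
  have hsep := four_le_card_blockSupport_sdiff_blockInterior hH hI hB
  have hsdiff := Finset.card_sdiff_add_card_eq_card
    (blockInterior_subset_blockSupport (B := B) (hH.exists_adj (by norm_num)))
  have hle : #(blockSupport H B) ≤ #B := Finset.card_le_card blockSupport_subset
  omega

variable {ι : Type*} {s : Finset ι} {B : ι → Finset V}

theorem two_le_card_filter_mem_blockSupport_add_blockInterior (hH : ∀ v, ∃ u, H.Adj v u)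
    (hcover : ∀ u v, H.Adj u v → ∃ i ∈ s, u ∈ B i ∧ v ∈ B i) (v : V) :
    2 ≤ #{i ∈ s | v ∈ blockSupport H (B i)} + #{i ∈ s | v ∈ blockInterior H (B i)} := by
  obtain ⟨u, hvu⟩ := hH v
  obtain ⟨i, hi, hvi, hui⟩ := hcover v u hvu
  have hsupp : i ∈ {i ∈ s | v ∈ blockSupport H (B i)} := by
    simpa [hi, blockSupport, hvi] using ⟨u, hui, hvu⟩
  by_cases hint : v ∈ blockInterior H (B i)
  · have one_le_supp := Finset.card_pos.2 ⟨i, hsupp⟩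
    have one_le_int : 0 < #{i ∈ s | v ∈ blockInterior H (B i)} :=
      Finset.card_pos.2 ⟨i, Finset.mem_filter.2 ⟨hi, hint⟩⟩
    omega
  · obtain ⟨w, hvw, hwi⟩ : ∃ w, H.Adj v w ∧ w ∉ B i := by
      simpa [blockInterior, hvi] using hint
    obtain ⟨j, hj, hvj, hwj⟩ := hcover v w hvw
    have hsupp' : j ∈ {i ∈ s | v ∈ blockSupport H (B i)} := by
      simpa [hj, blockSupport, hvj] using ⟨w, hwj, hvw⟩
    have hij : i ≠ j := by rintro rfl; exact hwi hwj
    exact le_add_right (Finset.one_lt_card.2 ⟨i, hsupp, j, hsupp', hij⟩)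

theorem two_mul_card_le_sum_blockSupport_add_blockInterior (hH : ∀ v, ∃ u, H.Adj v u)
    (hcover : ∀ u v, H.Adj u v → ∃ i ∈ s, u ∈ B i ∧ v ∈ B i) :
    2 * Fintype.card V ≤ ∑ i ∈ s, (#(blockSupport H (B i)) + #(blockInterior H (B i))) := by
  have double_count (F : ι → Finset V) : ∑ i ∈ s, #(F i) = ∑ v, #{i ∈ s | v ∈ F i} := by
    simpa [Finset.bipartiteAbove, Finset.bipartiteBelow] using
      (Finset.sum_card_bipartiteAbove_eq_sum_card_bipartiteBelow (s := Finset.univ) (t := s)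
        fun v i ↦ v ∈ F i).symm
  calc 2 * Fintype.card V = ∑ _v : V, 2 := by simp [mul_comm]
    _ ≤ ∑ v, (#{i ∈ s | v ∈ blockSupport H (B i)} + #{i ∈ s | v ∈ blockInterior H (B i)}) :=
        Finset.sum_le_sum fun v _ ↦
          two_le_card_filter_mem_blockSupport_add_blockInterior hH hcover v
    _ = ∑ i ∈ s, (#(blockSupport H (B i)) + #(blockInterior H (B i))) := by
        rw [Finset.sum_add_distrib, Finset.sum_add_distrib, double_count, double_count]

end Blocks

open scoped Finset in
theorem IsKConnected.card_le_sum_card_sub_two_add_two {V ι : Type*} [Fintype V] {H : SimpleGraph V}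
    (hH : IsKConnected H 4) {s : Finset ι} {B : ι → Finset V}
    (hconn : ∀ i ∈ s, (Hᶜ.induce (B i : Set V)).Connected)
    (hcover : ∀ u v, H.Adj u v → ∃ i ∈ s, u ∈ B i ∧ v ∈ B i) :
    Fintype.card V ≤ ∑ i ∈ s, (#(B i) - 2) + 2 := by
  classical
  by_cases huniv : ∃ i ∈ s, B i = Finset.univ
  · obtain ⟨i, his, hi⟩ := huniv
    have := Finset.single_le_sum (f := fun i ↦ #(B i) - 2) (fun _ _ ↦ Nat.zero_le _) his
    simp only [hi, Finset.card_univ] at this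
    omega
  push Not at huniv
  have hcharge := calc
    2 * Fintype.card V
      ≤ ∑ i ∈ s, (#(blockSupport H (B i)) + #(blockInterior H (B i))) :=
        two_mul_card_le_sum_blockSupport_add_blockInterior (hH.exists_adj (by norm_num)) hcover
    _ ≤ ∑ i ∈ s, 2 * (#(B i) - 2) := Finset.sum_le_sum fun i hi ↦
        card_blockSupport_add_card_blockInterior_le hH (hconn i hi) (huniv i hi)
    _ = 2 * ∑ i ∈ s, (#(B i) - 2) := (Finset.mul_sum _ _ _).symm
  omega

section Colorings

variable {V : Type*} {G : SimpleGraph V} {c : Sym2 V → ℕ}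

variable (G c) in
/-- The spanning subgraph of `G` formed by the edges of color `k`. -/
def colorClass (k : ℕ) : SimpleGraph V := fromEdgeSet {e ∈ G.edgeSet | c e = k}

theorem edgeSet_colorClass (k : ℕ) : (colorClass G c k).edgeSet = {e ∈ G.edgeSet | c e = k} := by
  rw [colorClass, edgeSet_fromEdgeSet, sdiff_eq_left, Set.disjoint_left]
  exact fun e he ↦ G.not_isDiag_of_mem_edgeSet he.1

theorem colorClass_le (k : ℕ) : colorClass G c k ≤ G := by
  rw [← edgeSet_subset_edgeSet, edgeSet_colorClass]
  exact Set.sep_subset _ _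

theorem colorClass_ne_bot {k : ℕ} (hk : k ∈ c '' G.edgeSet) : colorClass G c k ≠ ⊥ := by
  rw [← edgeSet_nonempty, edgeSet_colorClass]
  exact hk

theorem IsMCColoring.exists_reachable_colorClass (hc : IsMCColoring G c) {u v : V} (huv : u ≠ v) :
    ∃ k ∈ c '' G.edgeSet, (colorClass G c k).Reachable u v := by
  obtain ⟨p, -, k, hk⟩ := hc u v
  obtain ⟨e, he⟩ := List.exists_mem_of_ne_nil _ (mt Walk.edges_eq_nil.1 (p.not_nil_of_ne huv))
  refine ⟨k, ⟨e, p.edges_subset_edgeSet he, hk e he⟩, ⟨p.transfer _ fun e he ↦ ?_⟩⟩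
  rw [edgeSet_colorClass]
  exact ⟨p.edges_subset_edgeSet he, hk e he⟩

theorem isMCColoring_of_connected_subgraph {T : SimpleGraph V} (hTG : T ≤ G) (hT : T.Connected)
    {k : ℕ} (hk : ∀ e ∈ T.edgeSet, c e = k) : IsMCColoring G c := by
  intro u v
  obtain ⟨p, hp⟩ := (hT.preconnected u v).exists_isPath
  refine ⟨p.mapLe hTG, (Walk.isPath_mapLe hTG).2 hp, k, fun e he ↦ ?_⟩
  rw [Walk.edges_mapLe_eq_edges] at he
  exact hk e (p.edges_subset_edgeSet he)

theorem exists_isMCColoring_ncard_add_two_le [Fintype V] [Nontrivial V] (hG : G.Connected) :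
    ∃ c, IsMCColoring G c ∧
      G.edgeSet.ncard + 2 ≤ (c '' G.edgeSet).ncard + Fintype.card V := by
  classical
  obtain ⟨T, hTG, hT⟩ := hG.exists_isTree_le
  obtain ⟨φ, hφ⟩ := exists_injective_nat (Sym2 V)
  let c (e : Sym2 V) : ℕ := if e ∈ T.edgeSet then 0 else φ e + 1
  refine ⟨c, isMCColoring_of_connected_subgraph hTG hT.connected fun e he ↦ if_pos he, ?_⟩
  have hTcard : T.edgeSet.ncard + 1 = Fintype.card V := by
    rw [← hT.card_edgeFinset, Set.ncard_eq_toFinset_card', edgeFinset]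
  obtain ⟨e₀, he₀⟩ : T.edgeSet.Nonempty := by
    have := Fintype.one_lt_card (α := V)
    exact Set.nonempty_of_ncard_ne_zero (by omega)
  have hsub : T.edgeSet ⊆ G.edgeSet := edgeSet_mono hTG
  have hinj : Set.InjOn c (insert e₀ (G.edgeSet \ T.edgeSet)) := by
    rintro e (rfl | he) e' (rfl | he') h <;> grind [hφ.eq_iff]
  have hle : (G.edgeSet \ T.edgeSet).ncard + 1 ≤ (c '' G.edgeSet).ncard := by
    rw [← Set.ncard_insert_of_notMem (a := e₀) (by simp [he₀]), ← hinj.ncard_image]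
    exact Set.ncard_le_ncard (Set.image_mono (Set.insert_subset (hsub he₀) Set.sdiff_subset))
  have := Set.ncard_sdiff_add_ncard_of_subset hsub
  omega

theorem ncard_edgeSet_eq_sum_colorClass [Finite V] {K : Finset ℕ}
    (hK : (K : Set ℕ) = c '' G.edgeSet) :
    G.edgeSet.ncard = ∑ k ∈ K, (colorClass G c k).edgeSet.ncard := by
  classical
  have := Fintype.ofFinite G.edgeSet
  have hmaps : Set.MapsTo c G.edgeSet.toFinset K := by
    rw [hK, Set.coe_toFinset]
    exact Set.mapsTo_image c G.edgeSet
  rw [Set.ncard_eq_toFinset_card', Finset.card_eq_sum_card_fiberwise hmaps]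
  refine Finset.sum_congr rfl fun k _ ↦ ?_
  rw [edgeSet_colorClass, ← Set.ncard_coe_finset, Finset.coe_filter]
  simp only [Set.mem_toFinset]

theorem IsMCColoring.card_le_sum_ncard_supp_sub_two_add_two [Fintype V] (hc : IsMCColoring G c)
    (hG : IsKConnected Gᶜ 4) {K : Finset ℕ} (hK : (K : Set ℕ) = c '' G.edgeSet)
    [∀ k, Fintype (colorClass G c k).ConnectedComponent] :
    Fintype.card V ≤
      ∑ k ∈ K, ∑ C : (colorClass G c k).ConnectedComponent, (C.supp.ncard - 2) + 2 := by
  classical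
  let block (i : Σ k, (colorClass G c k).ConnectedComponent) : Finset V := i.2.supp.toFinset
  have block_connected (i) : (Gᶜᶜ.induce (block i : Set V)).Connected := by
    rw [compl_compl, Set.coe_toFinset]
    exact i.2.connected_toSimpleGraph.mono (comap_monotone _ (colorClass_le i.1))
  have block_cover (u v : V) (huv : Gᶜ.Adj u v) :
      ∃ i ∈ K.sigma fun _ ↦ Finset.univ, u ∈ block i ∧ v ∈ block i := by
    obtain ⟨k, hk, hreach⟩ := hc.exists_reachable_colorClass huv.ne
    rw [← hK, Finset.mem_coe] at hk
    exact ⟨⟨k, (colorClass G c k).connectedComponentMk u⟩, by simpa using hk, by simp [block],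
      by simpa [block] using hreach.symm⟩
  have hcard := hG.card_le_sum_card_sub_two_add_two (fun i _ ↦ block_connected i) block_cover
  rw [Finset.sum_sigma] at hcard
  simpa only [block, ← Set.ncard_eq_toFinset_card'] using hcard

theorem IsMCColoring.ncard_image_add_card_le [Fintype V] (hc : IsMCColoring G c)
    (hG : IsKConnected Gᶜ 4) :
    (c '' G.edgeSet).ncard + Fintype.card V ≤ G.edgeSet.ncard + 2 := by
  classical
  obtain ⟨K, hK⟩ := (Set.toFinite (c '' G.edgeSet)).exists_finset_coe
  have hblocks := hc.card_le_sum_ncard_supp_sub_two_add_two hG hK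
  have hclass (k) (hk : k ∈ K) :
      1 + ∑ C : (colorClass G c k).ConnectedComponent, (C.supp.ncard - 2) ≤
        (colorClass G c k).edgeSet.ncard :=
    Nat.one_add_le_iff.2 (sum_ncard_supp_sub_two_lt (colorClass_ne_bot (hK ▸ hk)))
  have hsum := Finset.sum_le_sum hclass
  rw [Finset.sum_add_distrib, ← Finset.card_eq_sum_ones,
    ← ncard_edgeSet_eq_sum_colorClass hK] at hsum
  rw [← hK, Set.ncard_coe_finset]
  omega

end Colorings

/-- If `G` is a connected graph with `n > 3` vertices whose complement is
4-connected, then `mc(G) = m - n + 2`. -/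
theorem mc_eq_of_compl_four_connected {V : Type*} [Fintype V] [DecidableEq V]
    (G : SimpleGraph V) [DecidableRel G.Adj] (hG : G.Connected)
    (hn : 3 < Fintype.card V) (hc : IsKConnected Gᶜ 4) :
    (mcNum G : ℤ) = (G.edgeFinset.card : ℤ) - (Fintype.card V : ℤ) + 2 := by
  have : Nontrivial V := Fintype.one_lt_card_iff_nontrivial.1 (by omega)
  obtain ⟨c, hcol, hlower⟩ := exists_isMCColoring_ncard_add_two_le hG
  have hupper := hcol.ncard_image_add_card_le hc
  have hmax : mcNum G = (c '' G.edgeSet).ncard := by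
    refine IsGreatest.csSup_eq ⟨⟨c, hcol, rfl⟩, ?_⟩
    rintro _ ⟨c', hcol', rfl⟩
    have := hcol'.ncard_image_add_card_le hc
    omega
  have hedges : G.edgeSet.ncard = G.edgeFinset.card := Set.ncard_eq_toFinset_card' _
  omega
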